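/- arXiv:math/0609794 — 2 statements merged into one kernel-verified Lean document; each statement's English description precedes it below -/
import Mathlib

section
/- Let (X,T) be a distal minimal topological dynamical system. For (x0,x1,x2,x3,x4,x5,x6) ∈ X⁷ the following are equivalent: (1) the triples (x0,x1,x2,x3), (x0,x1,x4,x5) and (x0,x2,x4,x6) all belong to 𝒫; (2) there exists x7 ∈ X with (x0,x1,x2,x3,x4,x5,x6,x7) ∈ 𝒬; (3) there exist three sequences of integers (m_i), (n_i), (p_i) with T^{m_i} x0 → x1, T^{n_i} x0 → x2, T^{m_i+n_i} x0 → x3, T^{p_i} x0 → x4, T^{m_i+p_i} x0 → x5 and T^{n_i+p_i} x0 → x6. -/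
open Filter Topology

/-- The `n`-th iterate (`n : ℤ`) of a homeomorphism `T : X → X`. -/
def iterZ {X : Type*} [TopologicalSpace X] (T : X ≃ₜ X) (n : ℤ) : X → X :=
  fun x => (T.toEquiv ^ n) x

section Defs

variable {X : Type*} [TopologicalSpace X]

/-- The set of parallelograms `𝒫`: the closure in `X⁴` of
`{(x, Tᵐx, Tⁿx, Tᵐ⁺ⁿx) : x ∈ X, m, n ∈ ℤ}`. -/
def Para (T : X ≃ₜ X) : Set (X × X × X × X) :=
  closure {q | ∃ (x : X) (m n : ℤ),
    q = (x, iterZ T m x, iterZ T n x, iterZ T (m + n) x)}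

/-- The set of parallelepipeds `𝒬`: the closure in `X⁸ = X⁴ × X⁴` of
`{(x, Tᵐx, Tⁿx, Tᵐ⁺ⁿx, Tᵖx, Tᵐ⁺ᵖx, Tⁿ⁺ᵖx, Tᵐ⁺ⁿ⁺ᵖx) : x ∈ X, m, n, p ∈ ℤ}`. -/
def Pip (T : X ≃ₜ X) : Set ((X × X × X × X) × (X × X × X × X)) :=
  closure {q | ∃ (x : X) (m n p : ℤ),
    q = ((x, iterZ T m x, iterZ T n x, iterZ T (m + n) x),
         (iterZ T p x, iterZ T (m + p) x, iterZ T (n + p) x, iterZ T (m + n + p) x))}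

end Defs

section MetricDefs

variable {X : Type*} [MetricSpace X]

/-- `(X, T)` is transitive: some point has dense orbit `{Tⁿx : n ∈ ℤ}`. -/
def IsTransitive (T : X ≃ₜ X) : Prop :=
  ∃ x : X, Dense (Set.range fun n : ℤ => iterZ T n x)

/-- `(X, T)` is minimal: every point has dense orbit. -/
def IsMinimal (T : X ≃ₜ X) : Prop :=
  ∀ x : X, Dense (Set.range fun n : ℤ => iterZ T n x)

/-- `(x, y)` is a proximal pair: `inf_{n ∈ ℤ} d(Tⁿx, Tⁿy) = 0`. -/
def ProximalPair (T : X ≃ₜ X) (x y : X) : Prop :=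
  ⨅ n : ℤ, dist (iterZ T n x) (iterZ T n y) = 0

/-- `(X, T)` is distal: every pair of distinct points is distal,
i.e. `inf_{n ∈ ℤ} d(Tⁿx, Tⁿy) > 0`. -/
def IsDistal (T : X ≃ₜ X) : Prop :=
  ∀ x y : X, x ≠ y → 0 < ⨅ n : ℤ, dist (iterZ T n x) (iterZ T n y)

/-- The regionally proximal relation `RP`. -/
def RP (T : X ≃ₜ X) (x y : X) : Prop :=
  ∀ ε > 0, ∃ x' y' : X, ∃ n : ℤ,
    dist x' x < ε ∧ dist y' y < ε ∧ dist (iterZ T n x') (iterZ T n y') < ε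

/-- The doubly regionally proximal relation `RP²`. -/
def RP2 (T : X ≃ₜ X) (x y : X) : Prop :=
  ∀ ε > 0, ∃ x' y' : X, ∃ m n : ℤ,
    dist x' x < ε ∧ dist y' y < ε ∧
    dist (iterZ T m x') (iterZ T m y') < ε ∧
    dist (iterZ T n x') (iterZ T n y') < ε ∧
    dist (iterZ T (m + n) x') (iterZ T (m + n) y') < ε

/-- The strongly doubly regionally proximal relation `RP²ₛ`. -/
def RP2S (T : X ≃ₜ X) (x y : X) : Prop :=
  ∀ ε > 0, ∃ x' y' : X, ∃ m n : ℤ,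
    dist x' x < ε ∧ dist y' y < ε ∧
    dist (iterZ T m x') y < ε ∧ dist (iterZ T n x') y < ε ∧
    dist (iterZ T (m + n) x') y < ε ∧
    dist (iterZ T m y') y < ε ∧ dist (iterZ T n y') y < ε ∧
    dist (iterZ T (m + n) y') y < ε

end MetricDefs

section Ellis

theorem iterZ_add_apply {X : Type*} [TopologicalSpace X] (T : X ≃ₜ X) (m n : ℤ) (x : X) :
    iterZ T (m + n) x = iterZ T m (iterZ T n x) := by
  simp [iterZ, zpow_add, Equiv.Perm.mul_apply]

theorem iterZ_zero_apply {X : Type*} [TopologicalSpace X] (T : X ≃ₜ X) (x : X) :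
    iterZ T 0 x = x := by
  simp [iterZ]

theorem iterZ_continuous {X : Type*} [TopologicalSpace X] (T : X ≃ₜ X) (n : ℤ) :
    Continuous (iterZ T n) := by
  have h1 : ∀ k : ℕ, Continuous (iterZ T (k : ℤ)) := by
    intro k
    induction k with
    | zero =>
      have : iterZ T ((0 : ℕ) : ℤ) = id := by funext x; simp [iterZ_zero_apply]
      rw [this]; exact continuous_id
    | succ k ih =>
      have : iterZ T ((k + 1 : ℕ) : ℤ) = iterZ T (k : ℤ) ∘ T := by
        funext x
        push_cast
        rw [iterZ_add_apply]
        simp [iterZ]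
      rw [this]; exact ih.comp T.continuous
  have h2 : ∀ k : ℕ, Continuous (iterZ T (-(k : ℤ))) := by
    intro k
    induction k with
    | zero =>
      have : iterZ T (-((0 : ℕ) : ℤ)) = id := by funext x; simp [iterZ_zero_apply]
      rw [this]; exact continuous_id
    | succ k ih =>
      have : iterZ T (-((k + 1 : ℕ) : ℤ)) = iterZ T (-(k : ℤ)) ∘ T.symm := by
        funext x
        have e : (-((k + 1 : ℕ) : ℤ)) = -(k : ℤ) + (-1) := by push_cast; ring
        rw [e, iterZ_add_apply]
        simp only [Function.comp]
        congr 1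
      rw [this]; exact ih.comp T.symm.continuous
  obtain ⟨k, rfl | rfl⟩ := n.eq_nat_or_neg
  · exact h1 k
  · exact h2 k

/-- The enveloping semigroup of the action of a set `S` of exponents. -/
def EnvS {X ι : Type*} [TopologicalSpace X] (T : X ≃ₜ X) (S : AddSubmonoid (ι → ℤ)) :
    Set (ι → X → X) :=
  closure {p | ∃ s ∈ S, p = fun i => iterZ T (s i)}

variable {X ι κ : Type*} [MetricSpace X] [CompactSpace X] {T : X ≃ₜ X}

theorem EnvS_compact (S : AddSubmonoid (ι → ℤ)) : IsCompact (EnvS T S) :=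
  isClosed_closure.isCompact

theorem EnvS_mul {S : AddSubmonoid (ι → ℤ)} {p q : ι → X → X}
    (hp : p ∈ EnvS T S) (hq : q ∈ EnvS T S) : (fun i x => p i (q i x)) ∈ EnvS T S := by
  have h1 : ∀ s ∈ S, ∀ q ∈ EnvS T S, (fun i x => iterZ T (s i) (q i x)) ∈ EnvS T S := by
    intro s hs q hq
    refine map_mem_closure (f := fun q : ι → X → X => fun i x => iterZ T (s i) (q i x)) ?_ hq ?_
    · refine continuous_pi fun i => continuous_pi fun x => ?_
      exact (iterZ_continuous T (s i)).comp (by fun_prop)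
    · rintro _ ⟨t, ht, rfl⟩
      refine ⟨s + t, S.add_mem hs ht, ?_⟩
      funext i x
      simp [iterZ_add_apply]
  have h2 : EnvS T S ⊆ {p | (fun i x => p i (q i x)) ∈ EnvS T S} := by
    refine closure_minimal ?_ ?_
    · rintro _ ⟨s, hs, rfl⟩
      exact h1 s hs q hq
    · refine IsClosed.preimage (f := fun p : ι → X → X => fun i x => p i (q i x)) ?_ isClosed_closure
      fun_prop
  exact h2 hp

theorem EnvS_inj (hd : IsDistal T) {S : AddSubmonoid (ι → ℤ)} {p : ι → X → X}
    (hp : p ∈ EnvS T S) (i : ι) : Function.Injective (p i) := by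
  intro x y hxy
  by_contra hne
  have hpos := hd x y hne
  have : EnvS T S ⊆ {p | (⨅ n : ℤ, dist (iterZ T n x) (iterZ T n y)) ≤ dist (p i x) (p i y)} := by
    refine closure_minimal ?_ ?_
    · rintro _ ⟨s, hs, rfl⟩
      have hb : BddBelow (Set.range fun n : ℤ => dist (iterZ T n x) (iterZ T n y)) := by
        refine ⟨0, ?_⟩
        rintro _ ⟨n, rfl⟩
        exact dist_nonneg
      exact ciInf_le hb (s i)
    · have hc : Continuous (fun p : ι → X → X => dist (p i x) (p i y)) := by fun_prop
      exact isClosed_le continuous_const hc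
  have h := this hp
  simp only [Set.mem_ofPred_eq, hxy, dist_self] at h
  linarith

theorem EnvS_id (S : AddSubmonoid (ι → ℤ)) : (fun _ x => x) ∈ EnvS T S := by
  refine subset_closure ⟨0, S.zero_mem, ?_⟩
  funext i x
  simp [iterZ_zero_apply]

theorem EnvS_inv (hd : IsDistal T) {S : AddSubmonoid (ι → ℤ)} {p : ι → X → X}
    (hp : p ∈ EnvS T S) :
    ∃ q ∈ EnvS T S, (∀ i x, q i (p i x) = x) ∧ (∀ i x, p i (q i x) = x) := by
  let _ : Semigroup (ι → X → X) :=
    { mul := fun p q i x => p i (q i x)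
      mul_assoc := fun _ _ _ => rfl }
  have hmul : ∀ (a b : ι → X → X), a * b = fun i x => a i (b i x) := fun _ _ => rfl
  have hc : ∀ r : ι → X → X, Continuous (fun a : ι → X → X => a * r) := by
    intro r
    simp only [hmul]
    fun_prop
  obtain ⟨u, ⟨e, he, rfl⟩, hu⟩ := exists_idempotent_in_compact_subsemigroup hc
    ((fun a => a * p) '' EnvS T S) ⟨_, Set.mem_image_of_mem _ (EnvS_id S)⟩
    ((EnvS_compact S).image (hc p))
    (by
      rintro _ ⟨a, ha, rfl⟩ _ ⟨b, hb, rfl⟩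
      have h1 : (fun i x => a i (p i x)) ∈ EnvS T S := EnvS_mul ha hp
      have h2 : (fun i x => a i (p i (b i x))) ∈ EnvS T S :=
        EnvS_mul (p := fun i x => a i (p i x)) h1 hb
      exact ⟨_, h2, rfl⟩)
  have h1 : ∀ i x, e i (p i x) = x := by
    intro i x
    have := congrFun (congrFun hu i) x
    exact EnvS_inj hd hp i (EnvS_inj hd he i this)
  exact ⟨e, he, h1, fun i x => EnvS_inj hd he i (h1 i (e i x))⟩

/-- The enveloping group. -/
def EG (hd : IsDistal T) (S : AddSubmonoid (ι → ℤ)) : Subgroup (ι → Equiv.Perm X) where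
  carrier := {p | (fun i => ⇑(p i)) ∈ EnvS T S}
  mul_mem' := fun {a b} ha hb =>
    EnvS_mul (p := fun i => ⇑(a i)) (q := fun i => ⇑(b i)) ha hb
  one_mem' := EnvS_id S
  inv_mem' := by
    intro p hp
    obtain ⟨q, hq, h1, h2⟩ := EnvS_inv hd hp
    have : (fun i => ⇑((p⁻¹) i)) = q := by
      funext i x
      change (p i)⁻¹ x = q i x
      rw [Equiv.Perm.inv_eq_iff_eq]
      exact (h2 i x).symm
    change (fun i => ⇑((p⁻¹) i)) ∈ EnvS T S
    rw [this]; exact hq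

theorem EG_lift (hd : IsDistal T) {S : AddSubmonoid (ι → ℤ)} {f : ι → X → X}
    (hf : f ∈ EnvS T S) : ∃ p ∈ EG hd S, ∀ i x, p i x = f i x := by
  obtain ⟨q, hq, h1, h2⟩ := EnvS_inv hd hf
  exact ⟨fun i => ⟨f i, q i, h1 i, h2 i⟩, hf, fun _ _ => rfl⟩

theorem EG_orbit (hd : IsDistal T) {S : AddSubmonoid (ι → ℤ)} {x y : ι → X}
    (h : y ∈ closure {z | ∃ s ∈ S, z = fun i => iterZ T (s i) (x i)}) :
    ∃ p ∈ EG hd S, ∀ i, p i (x i) = y i := by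
  have hc : Continuous (fun p : ι → X → X => fun i => p i (x i)) := by fun_prop
  have hcl : IsClosed ((fun p : ι → X → X => fun i => p i (x i)) '' EnvS T S) :=
    ((EnvS_compact S).image hc).isClosed
  have hsub : {z | ∃ s ∈ S, z = fun i => iterZ T (s i) (x i)} ⊆
      ((fun p : ι → X → X => fun i => p i (x i)) '' EnvS T S) := by
    rintro _ ⟨s, hs, rfl⟩
    exact ⟨_, subset_closure ⟨s, hs, rfl⟩, rfl⟩
  obtain ⟨f, hf, rfl⟩ := closure_minimal hsub hcl h
  obtain ⟨p, hp, hpf⟩ := EG_lift hd hf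
  exact ⟨p, hp, fun i => hpf i _⟩

theorem EG_orbit_mem (hd : IsDistal T) {S : AddSubmonoid (ι → ℤ)} {p : ι → Equiv.Perm X}
    (hp : p ∈ EG hd S) (x : ι → X) :
    (fun i => p i (x i)) ∈ closure {z | ∃ s ∈ S, z = fun i => iterZ T (s i) (x i)} := by
  refine map_mem_closure (f := fun p : ι → X → X => fun i => p i (x i)) (by fun_prop)
    (show (fun i => ⇑(p i)) ∈ closure _ from hp) ?_
  rintro _ ⟨s, hs, rfl⟩
  exact ⟨s, hs, rfl⟩

theorem EG_reindex (hd : IsDistal T) {S : AddSubmonoid (ι → ℤ)} {S' : AddSubmonoid (κ → ℤ)}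
    (j : κ → Option ι) (h : ∀ s ∈ S, (fun k => (j k).elim 0 s) ∈ S')
    {p : ι → Equiv.Perm X} (hp : p ∈ EG hd S) :
    (fun k => (j k).elim 1 p) ∈ EG hd S' := by
  have := map_mem_closure (f := fun p : ι → X → X => fun k => (j k).elim (fun x => x) p)
    (t := {p | ∃ s ∈ S', p = fun i => iterZ T (s i)}) ?_
    (show (fun i => ⇑(p i)) ∈ closure _ from hp) ?_
  · change (fun k => ⇑((j k).elim 1 p)) ∈ EnvS T S'
    have e : (fun k => ⇑((j k).elim 1 p)) =
        (fun k => (j k).elim (fun x => x) fun i => ⇑(p i)) := by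
      funext k
      cases j k <;> rfl
    rw [e]
    exact this
  · refine continuous_pi fun k => ?_
    cases j k
    · exact continuous_const
    · exact continuous_apply _
  · rintro _ ⟨s, hs, rfl⟩
    refine ⟨_, h s hs, ?_⟩
    funext k x
    change (j k).elim (fun x => x) (fun i => iterZ T (s i)) x = iterZ T ((j k).elim 0 s) x
    cases j k
    · exact (iterZ_zero_apply T x).symm
    · rfl

theorem EG_extend (hd : IsDistal T) {S : AddSubmonoid (ι → ℤ)} {S' : AddSubmonoid (κ → ℤ)}
    (j : κ → ι) (h : ∀ s ∈ S', ∃ t ∈ S, ∀ k, t (j k) = s k)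
    {p : κ → Equiv.Perm X} (hp : p ∈ EG hd S') :
    ∃ q ∈ EG hd S, ∀ k, q (j k) = p k := by
  have hc : Continuous (fun p : ι → X → X => fun k => p (j k)) := by fun_prop
  have hcl : IsClosed ((fun p : ι → X → X => fun k => p (j k)) '' EnvS T S) :=
    ((EnvS_compact S).image hc).isClosed
  have hsub : {p | ∃ s ∈ S', p = fun i => iterZ T (s i)} ⊆
      ((fun p : ι → X → X => fun k => p (j k)) '' EnvS T S) := by
    rintro _ ⟨s, hs, rfl⟩
    obtain ⟨t, ht, hts⟩ := h s hs
    refine ⟨_, subset_closure ⟨t, ht, rfl⟩, ?_⟩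
    funext k
    simp [hts]
  obtain ⟨f, hf, hfp⟩ := closure_minimal hsub hcl hp
  obtain ⟨q, hq, hqf⟩ := EG_lift hd hf
  refine ⟨q, hq, fun k => ?_⟩
  ext x
  rw [hqf]
  exact congrFun (congrFun hfp k) x

/-- Exponents `(m, n, m+n)`. -/
def S3 : AddSubmonoid (Fin 3 → ℤ) where
  carrier := {s | s 2 = s 0 + s 1}
  add_mem' := by intro a b ha hb; simp only [Set.mem_ofPred_eq, Pi.add_apply] at *; omega
  zero_mem' := by simp

/-- Exponents `(k, k+m, k+n, k+m+n)`. -/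
def S4 : AddSubmonoid (Fin 4 → ℤ) where
  carrier := {s | s 0 + s 3 = s 1 + s 2}
  add_mem' := by intro a b ha hb; simp only [Set.mem_ofPred_eq, Pi.add_apply] at *; omega
  zero_mem' := by simp

/-- Exponents `(k, k+m, k+n, k+m+n, -k, m)`. -/
def S4' : AddSubmonoid (Fin 6 → ℤ) where
  carrier := {s | s 0 + s 3 = s 1 + s 2 ∧ s 4 = - s 0 ∧ s 5 = s 1 - s 0}
  add_mem' := by intro a b ha hb; simp only [Set.mem_ofPred_eq, Pi.add_apply] at *; omega
  zero_mem' := by simp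

/-- Exponents `(m, n, m+n, p, m+p, n+p)`. -/
def S6 : AddSubmonoid (Fin 6 → ℤ) where
  carrier := {s | s 2 = s 0 + s 1 ∧ s 4 = s 0 + s 3 ∧ s 5 = s 1 + s 3}
  add_mem' := by intro a b ha hb; simp only [Set.mem_ofPred_eq, Pi.add_apply] at *; omega
  zero_mem' := by simp

theorem mem_S3 {s : Fin 3 → ℤ} : s ∈ S3 ↔ s 2 = s 0 + s 1 := Iff.rfl
theorem mem_S4 {s : Fin 4 → ℤ} : s ∈ S4 ↔ s 0 + s 3 = s 1 + s 2 := Iff.rfl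
theorem mem_S4' {s : Fin 6 → ℤ} : s ∈ S4' ↔
    s 0 + s 3 = s 1 + s 2 ∧ s 4 = - s 0 ∧ s 5 = s 1 - s 0 := Iff.rfl
theorem mem_S6 {s : Fin 6 → ℤ} : s ∈ S6 ↔
    s 2 = s 0 + s 1 ∧ s 4 = s 0 + s 3 ∧ s 5 = s 1 + s 3 := Iff.rfl

/-- `(p, 1, p)`. -/
theorem G3_left (hd : IsDistal T) {p q r : Equiv.Perm X} (h : ![p, q, r] ∈ EG hd S3) :
    ![p, 1, p] ∈ EG hd S3 := by
  have := EG_reindex hd (S' := S3) ![some 0, none, some 0] (by intro s hs; simp [mem_S3]) h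
  convert this using 1
  funext k; fin_cases k <;> rfl

/-- `(1, q, q)`. -/
theorem G3_right (hd : IsDistal T) {p q r : Equiv.Perm X} (h : ![p, q, r] ∈ EG hd S3) :
    ![1, q, q] ∈ EG hd S3 := by
  have := EG_reindex hd (S' := S3) ![none, some 1, some 1] (by intro s hs; simp [mem_S3]) h
  convert this using 1
  funext k; fin_cases k <;> rfl

/-- `(q, p, r)`. -/
theorem G3_swap (hd : IsDistal T) {p q r : Equiv.Perm X} (h : ![p, q, r] ∈ EG hd S3) :
    ![q, p, r] ∈ EG hd S3 := by
  have := EG_reindex hd (S' := S3) ![some 1, some 0, some 2]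
    (by intro s hs; simp [mem_S3] at *; omega) h
  convert this using 1
  funext k; fin_cases k <;> rfl

theorem G3_mul (hd : IsDistal T) {p q r p' q' r' : Equiv.Perm X} (h : ![p, q, r] ∈ EG hd S3)
    (h' : ![p', q', r'] ∈ EG hd S3) : ![p * p', q * q', r * r'] ∈ EG hd S3 := by
  convert mul_mem h h' using 1
  funext k; fin_cases k <;> rfl

theorem G3_inv (hd : IsDistal T) {p q r : Equiv.Perm X} (h : ![p, q, r] ∈ EG hd S3) :
    ![p⁻¹, q⁻¹, r⁻¹] ∈ EG hd S3 := by
  convert inv_mem h using 1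
  funext k; fin_cases k <;> rfl

theorem G3_phi (hd : IsDistal T) {p q r : Equiv.Perm X} (h : ![p, q, r] ∈ EG hd S3) :
    ![1, 1, r * p⁻¹ * q⁻¹] ∈ EG hd S3 := by
  simpa using G3_mul hd (G3_mul hd h (G3_inv hd (G3_left hd h))) (G3_inv hd (G3_right hd h))

theorem psi_phi (hd : IsDistal T) {ψ : Equiv.Perm X} (h : ![1, 1, 1, ψ] ∈ EG hd S4) :
    ![1, 1, ψ] ∈ EG hd S3 := by
  obtain ⟨Q, hQ, hQp⟩ := EG_extend hd (S := S4') ![0, 1, 2, 3]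
    (by
      intro s hs
      refine ⟨![s 0, s 1, s 2, s 3, - s 0, s 1 - s 0], ?_, ?_⟩
      · rw [mem_S4]at hs; simp [mem_S4', hs]
      · intro k; fin_cases k <;> rfl) h
  have q0 : Q 0 = 1 := hQp 0
  have q1 : Q 1 = 1 := hQp 1
  have q2 : Q 2 = 1 := hQp 2
  have q3 : Q 3 = ψ := hQp 3
  have a : ![1, Q 4, 1] ∈ EG hd S3 := by
    have := EG_reindex hd (S' := S3) ![some 0, some 4, none]
      (by intro s hs; simp [mem_S3, mem_S4'] at *; omega) hQ
    convert this using 1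
    funext k; fin_cases k <;> simp [q0]
  have b : ![Q 4, 1, Q 5] ∈ EG hd S3 := by
    have := EG_reindex hd (S' := S3) ![some 4, some 1, some 5]
      (by intro s hs; simp [mem_S3, mem_S4'] at *; omega) hQ
    convert this using 1
    funext k; fin_cases k <;> simp [q1]
  have c : ![Q 5, 1, ψ] ∈ EG hd S3 := by
    have := EG_reindex hd (S' := S3) ![some 5, some 2, some 3]
      (by intro s hs; simp [mem_S3, mem_S4'] at *; omega) hQ
    convert this using 1
    funext k; fin_cases k <;> simp [q2, q3]
  have a' := G3_inv hd (G3_phi hd a)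
  have b' := G3_phi hd b
  have c' := G3_phi hd c
  simpa using G3_mul hd (G3_mul hd c' b') a'

theorem para_G4 (hd : IsDistal T) (hm : IsMinimal T) {x0 x1 x2 x3 : X}
    (h : (x0, x1, x2, x3) ∈ Para T) :
    ∃ p ∈ EG hd S4, p 0 x0 = x0 ∧ p 1 x0 = x1 ∧ p 2 x0 = x2 ∧ p 3 x0 = x3 := by
  have key : ![x0, x1, x2, x3] ∈
      closure {z | ∃ s ∈ S4, z = fun i => iterZ T (s i) ((fun _ => x0 : Fin 4 → X) i)} := by
    have hc : Continuous (fun q : X × X × X × X => ![q.1, q.2.1, q.2.2.1, q.2.2.2]) := by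
      refine continuous_pi fun k => ?_
      fin_cases k <;> simp <;> fun_prop
    have hsub : Para T ⊆ (fun q : X × X × X × X => ![q.1, q.2.1, q.2.2.1, q.2.2.2]) ⁻¹'
        closure {z | ∃ s ∈ S4, z = fun i => iterZ T (s i) ((fun _ => x0 : Fin 4 → X) i)} := by
      refine closure_minimal ?_ (isClosed_closure.preimage hc)
      rintro _ ⟨x, m, n, rfl⟩
      have hx : x ∈ closure (Set.range fun n : ℤ => iterZ T n x0) := hm x0 x
      refine map_mem_closure
        (f := fun x => ![x, iterZ T m x, iterZ T n x, iterZ T (m + n) x]) ?_ hx ?_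
      · have h1 := iterZ_continuous T m
        have h2 := iterZ_continuous T n
        have h3 := iterZ_continuous T (m + n)
        refine continuous_pi fun k => ?_
        fin_cases k <;> simp <;> fun_prop
      · rintro _ ⟨k, rfl⟩
        refine ⟨![k, m + k, n + k, m + n + k], ?_, ?_⟩
        · simp [mem_S4]; ring
        · funext i; fin_cases i <;> simp [iterZ_add_apply]
    exact hsub h
  obtain ⟨p, hp, h⟩ := EG_orbit hd key
  exact ⟨p, hp, h 0, h 1, h 2, h 3⟩

theorem para_G3 (hd : IsDistal T) (hm : IsMinimal T) {x0 x1 x2 x3 : X}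
    (h : (x0, x1, x2, x3) ∈ Para T) :
    ∃ p q r : Equiv.Perm X, ![p, q, r] ∈ EG hd S3 ∧ p x0 = x1 ∧ q x0 = x2 ∧ r x0 = x3 := by
  obtain ⟨p, hp, h0, h1, h2, h3⟩ := para_G4 hd hm h
  have g0 := EG_reindex hd (S' := S4) ![some 0, some 0, some 0, some 0]
    (by intro s hs; simp [mem_S4]) hp
  have hp' := mul_mem hp (inv_mem g0)
  have h0' : (p 0)⁻¹ x0 = x0 := by rw [Equiv.Perm.inv_eq_iff_eq, h0]
  obtain ⟨a1, ha1⟩ : ∃ a, a = p 1 * (p 0)⁻¹ := ⟨_, rfl⟩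
  obtain ⟨a2, ha2⟩ : ∃ a, a = p 2 * (p 0)⁻¹ := ⟨_, rfl⟩
  obtain ⟨a3, ha3⟩ : ∃ a, a = p 3 * (p 0)⁻¹ := ⟨_, rfl⟩
  have ha : ![1, a1, a2, a3] ∈ EG hd S4 := by
    convert hp' using 1
    funext k; fin_cases k <;> simp [ha1, ha2, ha3]
  have e1 : a1 x0 = x1 := by rw [ha1, Equiv.Perm.mul_apply, h0', h1]
  have e2 : a2 x0 = x2 := by rw [ha2, Equiv.Perm.mul_apply, h0', h2]
  have e3 : a3 x0 = x3 := by rw [ha3, Equiv.Perm.mul_apply, h0', h3]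
  have g1 := EG_reindex hd (S' := S4) ![none, some 1, none, some 1]
    (by intro s hs; simp [mem_S4]) ha
  have g2 := EG_reindex hd (S' := S4) ![none, none, some 2, some 2]
    (by intro s hs; simp [mem_S4]) ha
  have f1 := EG_reindex hd (S' := S3) ![some 1, none, some 1]
    (by intro s hs; simp [mem_S3]) ha
  have f2 := EG_reindex hd (S' := S3) ![none, some 2, some 2]
    (by intro s hs; simp [mem_S3]) ha
  have hpsi : ![1, 1, 1, a3 * a1⁻¹ * a2⁻¹] ∈ EG hd S4 := by
    convert mul_mem (mul_mem ha (inv_mem g1)) (inv_mem g2) using 1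
    funext k; fin_cases k <;> simp
  have hphi := psi_phi hd hpsi
  refine ⟨a1, a2, a3, ?_, e1, e2, e3⟩
  convert mul_mem (mul_mem hphi f2) f1 using 1
  funext k; fin_cases k <;> simp

theorem one_three (hd : IsDistal T) (hm : IsMinimal T) {x0 x1 x2 x3 x4 x5 x6 : X}
    (hA : (x0, x1, x2, x3) ∈ Para T) (hB : (x0, x1, x4, x5) ∈ Para T)
    (hC : (x0, x2, x4, x6) ∈ Para T) :
    ∃ m n p : ℕ → ℤ,
        Tendsto (fun i => iterZ T (m i) x0) atTop (𝓝 x1) ∧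
        Tendsto (fun i => iterZ T (n i) x0) atTop (𝓝 x2) ∧
        Tendsto (fun i => iterZ T (m i + n i) x0) atTop (𝓝 x3) ∧
        Tendsto (fun i => iterZ T (p i) x0) atTop (𝓝 x4) ∧
        Tendsto (fun i => iterZ T (m i + p i) x0) atTop (𝓝 x5) ∧
        Tendsto (fun i => iterZ T (n i + p i) x0) atTop (𝓝 x6) := by
  obtain ⟨p1, p2, p3, hp, hp1, hp2, hp3⟩ := para_G3 hd hm hA
  obtain ⟨q1, q4, q5, hq, hq1, hq4, hq5⟩ := para_G3 hd hm hB
  obtain ⟨r2, r4, r6, hr, hr2, hr4, hr6⟩ := para_G3 hd hm hC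
  have comm : ∀ {a b : Equiv.Perm X}, ![a, 1, a] ∈ EG hd S3 → ![1, b, b] ∈ EG hd S3 →
      ![1, 1, a * b * a⁻¹ * b⁻¹] ∈ EG hd S3 := by
    intro a b ha hb
    simpa using G3_mul hd (G3_mul hd (G3_mul hd ha hb) (G3_inv hd ha)) (G3_inv hd hb)
  have c1 := comm (G3_swap hd (G3_right hd hr)) (G3_right hd hp)
  have c2 := comm (G3_swap hd (G3_right hd hp)) (G3_right hd hq)
  obtain ⟨u, hu⟩ : ∃ u, u = p3 * p1⁻¹ * p2⁻¹ := ⟨_, rfl⟩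
  obtain ⟨v, hv⟩ : ∃ v, v = q5 * q1⁻¹ * q4⁻¹ := ⟨_, rfl⟩
  obtain ⟨w, hw⟩ : ∃ w, w = r6 * r2⁻¹ * r4⁻¹ * (r4 * p2 * r4⁻¹ * p2⁻¹) *
    (p2 * q4 * p2⁻¹ * q4⁻¹) := ⟨_, rfl⟩
  have hu' : ![1, 1, u] ∈ EG hd S3 := hu ▸ G3_phi hd hp
  have hv' : ![1, 1, v] ∈ EG hd S3 := hv ▸ G3_phi hd hq
  have hw' : ![1, 1, w] ∈ EG hd S3 := by
    rw [hw]
    simpa using G3_mul hd (G3_mul hd (G3_phi hd hr) c1) c2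
  -- evaluation
  have e3 : (u * p2 * p1) x0 = x3 := by rw [hu]; simpa using hp3
  have i1 : q1⁻¹ x1 = x0 := by rw [Equiv.Perm.inv_eq_iff_eq, hq1]
  have i2 : r2⁻¹ x2 = x0 := by rw [Equiv.Perm.inv_eq_iff_eq, hr2]
  have i4 : r4⁻¹ x4 = x0 := by rw [Equiv.Perm.inv_eq_iff_eq, hr4]
  have e5 : (v * q4 * p1) x0 = x5 := by
    rw [hv]; simp [Equiv.Perm.mul_apply, hp1, i1, hq5]
  have e6 : (w * q4 * p2) x0 = x6 := by
    have e : w * q4 * p2 = r6 * r2⁻¹ * p2 * r4⁻¹ * q4 := by rw [hw]; group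
    rw [e]
    simp only [Equiv.Perm.mul_apply]
    rw [hq4, i4, hp2, i2, hr6]
  -- assemble
  have z1 := EG_reindex hd (S' := S6) ![some 0, some 1, some 2, none, some 0, some 1]
    (by intro s hs; simp [mem_S6, mem_S3] at *; omega) hu'
  have z2 := EG_reindex hd (S' := S6) ![some 0, none, some 0, some 1, some 2, some 1]
    (by intro s hs; simp [mem_S6, mem_S3] at *; omega) hv'
  have z3 := EG_reindex hd (S' := S6) ![none, some 0, some 0, some 1, some 1, some 2]
    (by intro s hs; simp [mem_S6, mem_S3] at *; omega) hw'
  have z4 := EG_reindex hd (S' := S6) ![none, none, none, some 1, some 1, some 1]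
    (by intro s hs; simp [mem_S6]) hq
  have z5 := EG_reindex hd (S' := S6) ![none, some 1, some 1, none, none, some 1]
    (by intro s hs; simp [mem_S6]) hp
  have z6 := EG_reindex hd (S' := S6) ![some 0, none, some 0, none, some 0, none]
    (by intro s hs; simp [mem_S6]) hp
  have hz : ![p1, p2, u * p2 * p1, q4, v * q4 * p1, w * q4 * p2] ∈ EG hd S6 := by
    convert mul_mem (mul_mem (mul_mem (mul_mem (mul_mem z1 z2) z3) z4) z5) z6 using 1
    funext k; fin_cases k <;> simp
  have hcl := EG_orbit_mem hd hz (fun _ => x0)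
  obtain ⟨a, ha, hlim⟩ := mem_closure_iff_seq_limit.1 hcl
  choose s hs has using ha
  rw [tendsto_pi_nhds] at hlim
  have hl : ∀ k : Fin 6, Tendsto (fun i => iterZ T (s i k) x0) atTop
      (𝓝 ((![p1, p2, u * p2 * p1, q4, v * q4 * p1, w * q4 * p2] : Fin 6 → Equiv.Perm X) k x0)) := by
    intro k
    refine (hlim k).congr fun i => ?_
    rw [has i]
  have l0 : Tendsto (fun i => iterZ T (s i 0) x0) atTop (𝓝 (p1 x0)) := hl 0
  have l1 : Tendsto (fun i => iterZ T (s i 1) x0) atTop (𝓝 (p2 x0)) := hl 1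
  have l2 : Tendsto (fun i => iterZ T (s i 2) x0) atTop (𝓝 ((u * p2 * p1) x0)) := hl 2
  have l3 : Tendsto (fun i => iterZ T (s i 3) x0) atTop (𝓝 (q4 x0)) := hl 3
  have l4 : Tendsto (fun i => iterZ T (s i 4) x0) atTop (𝓝 ((v * q4 * p1) x0)) := hl 4
  have l5 : Tendsto (fun i => iterZ T (s i 5) x0) atTop (𝓝 ((w * q4 * p2) x0)) := hl 5
  rw [hp1] at l0
  rw [hp2] at l1
  rw [e3] at l2
  rw [hq4] at l3
  rw [e5] at l4
  rw [e6] at l5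
  refine ⟨fun i => s i 0, fun i => s i 1, fun i => s i 3, l0, l1, ?_, l3, ?_, ?_⟩
  · exact l2.congr fun i => by rw [(mem_S6.1 (hs i)).1]
  · exact l4.congr fun i => by rw [(mem_S6.1 (hs i)).2.1]
  · exact l5.congr fun i => by rw [(mem_S6.1 (hs i)).2.2]

theorem three_two {x0 x1 x2 x3 x4 x5 x6 : X} (h : ∃ m n p : ℕ → ℤ,
        Tendsto (fun i => iterZ T (m i) x0) atTop (𝓝 x1) ∧
        Tendsto (fun i => iterZ T (n i) x0) atTop (𝓝 x2) ∧
        Tendsto (fun i => iterZ T (m i + n i) x0) atTop (𝓝 x3) ∧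
        Tendsto (fun i => iterZ T (p i) x0) atTop (𝓝 x4) ∧
        Tendsto (fun i => iterZ T (m i + p i) x0) atTop (𝓝 x5) ∧
        Tendsto (fun i => iterZ T (n i + p i) x0) atTop (𝓝 x6)) :
    ∃ x7 : X, ((x0, x1, x2, x3), (x4, x5, x6, x7)) ∈ Pip T := by
  obtain ⟨m, n, p, h1, h2, h3, h4, h5, h6⟩ := h
  obtain ⟨x7, -, φ, hφ, h7⟩ := isCompact_univ.tendsto_subseq
    (x := fun i => iterZ T (m i + n i + p i) x0) (fun _ => Set.mem_univ _)
  have ht := hφ.tendsto_atTop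
  refine ⟨x7, mem_closure_of_tendsto
    (((tendsto_const_nhds (x := x0)).prodMk_nhds ((h1.comp ht).prodMk_nhds
      ((h2.comp ht).prodMk_nhds (h3.comp ht)))).prodMk_nhds
      ((h4.comp ht).prodMk_nhds ((h5.comp ht).prodMk_nhds ((h6.comp ht).prodMk_nhds h7))))
    (Eventually.of_forall fun i => ⟨x0, m (φ i), n (φ i), p (φ i), rfl⟩)⟩

theorem two_one {x0 x1 x2 x3 x4 x5 x6 : X}
    (h : ∃ x7 : X, ((x0, x1, x2, x3), (x4, x5, x6, x7)) ∈ Pip T) :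
    (x0, x1, x2, x3) ∈ Para T ∧ (x0, x1, x4, x5) ∈ Para T ∧ (x0, x2, x4, x6) ∈ Para T := by
  obtain ⟨x7, h⟩ := h
  refine ⟨?_, ?_, ?_⟩
  · refine map_mem_closure (f := fun q : (X × X × X × X) × (X × X × X × X) => q.1)
      (by fun_prop) h ?_
    rintro _ ⟨x, m, n, p, rfl⟩
    exact ⟨x, m, n, rfl⟩
  · refine map_mem_closure (f := fun q : (X × X × X × X) × (X × X × X × X) =>
      (q.1.1, q.1.2.1, q.2.1, q.2.2.1)) (by fun_prop) h ?_
    rintro _ ⟨x, m, n, p, rfl⟩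
    exact ⟨x, m, p, rfl⟩
  · refine map_mem_closure (f := fun q : (X × X × X × X) × (X × X × X × X) =>
      (q.1.1, q.1.2.2.1, q.2.1, q.2.2.2.1)) (by fun_prop) h ?_
    rintro _ ⟨x, m, n, p, rfl⟩
    exact ⟨x, n, p, rfl⟩

end Ellis

/-- Completion of parallelepipeds in a distal minimal system: equivalent conditions
on a 7-tuple. -/
theorem stmt13 {X : Type*} [MetricSpace X] [CompactSpace X] [Nonempty X]
    (T : X ≃ₜ X) (hdistal : IsDistal T) (hmin : IsMinimal T)
    (x0 x1 x2 x3 x4 x5 x6 : X) :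
    (((x0, x1, x2, x3) ∈ Para T ∧ (x0, x1, x4, x5) ∈ Para T ∧
        (x0, x2, x4, x6) ∈ Para T) ↔
      (∃ x7 : X, ((x0, x1, x2, x3), (x4, x5, x6, x7)) ∈ Pip T)) ∧
    ((∃ x7 : X, ((x0, x1, x2, x3), (x4, x5, x6, x7)) ∈ Pip T) ↔
      (∃ m n p : ℕ → ℤ,
        Tendsto (fun i => iterZ T (m i) x0) atTop (𝓝 x1) ∧
        Tendsto (fun i => iterZ T (n i) x0) atTop (𝓝 x2) ∧
        Tendsto (fun i => iterZ T (m i + n i) x0) atTop (𝓝 x3) ∧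
        Tendsto (fun i => iterZ T (p i) x0) atTop (𝓝 x4) ∧
        Tendsto (fun i => iterZ T (m i + p i) x0) atTop (𝓝 x5) ∧
        Tendsto (fun i => iterZ T (n i + p i) x0) atTop (𝓝 x6))) := by
  have h13 : ((x0, x1, x2, x3) ∈ Para T ∧ (x0, x1, x4, x5) ∈ Para T ∧
        (x0, x2, x4, x6) ∈ Para T) → _ :=
    fun h => one_three hdistal hmin h.1 h.2.1 h.2.2
  exact ⟨⟨fun h => three_two (h13 h), two_one⟩, ⟨fun h => h13 (two_one h), three_two⟩⟩
end

section
/- Let (X,T) be a distal minimal topological dynamical system, let x0 ∈ X, and let L be the closure in X⁵ of the set {(T^m x0, T^n x0, T^{m+n} x0, T^p x0, T^{p+m} x0) : m,n,p ∈ ℤ}. Suppose (x1,x2,x3,x4,x5) ∈ L and x'_2, x'_4 ∈ X satisfy (x2,x'_2) ∈ RP and (x4,x'_4) ∈ RP. Then (x1,x'_2,x3,x'_4,x5) ∈ L. -/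
open Filter Topology

section Helpers

variable {X : Type*}

lemma iterZ_zero [TopologicalSpace X] (T : X ≃ₜ X) (x : X) : iterZ T 0 x = x := by
  simp [iterZ]

lemma iterZ_add [TopologicalSpace X] (T : X ≃ₜ X) (m n : ℤ) (x : X) :
    iterZ T (m + n) x = iterZ T m (iterZ T n x) := by
  simp [iterZ, zpow_add]

lemma iterZ_cont [TopologicalSpace X] (T : X ≃ₜ X) (n : ℤ) : Continuous (iterZ T n) := by
  induction n using Int.induction_on with
  | zero =>
    have : iterZ T 0 = id := funext fun x => iterZ_zero T x
    rw [this]; exact continuous_id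
  | succ i ih =>
    have : iterZ T (i + 1) = fun x => iterZ T i (T x) := by
      funext x; rw [iterZ_add]; simp [iterZ]
    rw [this]; exact ih.comp T.continuous
  | pred i ih =>
    have : iterZ T (-i - 1) = fun x => iterZ T (-i) (T.symm x) := by
      funext x; rw [sub_eq_add_neg, iterZ_add]; simp [iterZ]
    rw [this]; exact ih.comp T.symm.continuous

/-- Ellis enveloping semigroup. -/
def EE [TopologicalSpace X] (T : X ≃ₜ X) : Set (X → X) :=
  closure (Set.range fun n : ℤ => iterZ T n)

lemma EE_induct [TopologicalSpace X] (T : X ≃ₜ X) {Y : Type*} [TopologicalSpace Y]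
    (f : (X → X) → Y) (hf : Continuous f) (C : Set Y) (hC : IsClosed C)
    (h : ∀ n, f (iterZ T n) ∈ C) (p : X → X) (hp : p ∈ EE T) : f p ∈ C := by
  have : EE T ⊆ f ⁻¹' C := by
    apply closure_minimal _ (hC.preimage hf)
    rintro _ ⟨n, rfl⟩
    exact h n
  exact this hp

lemma EE_comp [TopologicalSpace X] (T : X ≃ₜ X) (p q : X → X) (hp : p ∈ EE T) (hq : q ∈ EE T) :
    p ∘ q ∈ EE T := by
  refine EE_induct T (fun r => r ∘ q) (by fun_prop) (EE T) isClosed_closure ?_ p hp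
  intro n
  refine EE_induct T (fun r => iterZ T n ∘ r) ?_ (EE T) isClosed_closure ?_ q hq
  · exact continuous_pi fun x => (iterZ_cont T n).comp (continuous_apply x)
  · intro k
    apply subset_closure
    exact ⟨n + k, funext fun x => iterZ_add T n k x⟩

lemma EE_compact [TopologicalSpace X] [CompactSpace X] (T : X ≃ₜ X) : IsCompact (EE T) :=
  isClosed_closure.isCompact

lemma EE_inv [MetricSpace X] [CompactSpace X] (T : X ≃ₜ X) (hd : IsDistal T)
    (p : X → X) (hp : p ∈ EE T) : ∃ q ∈ EE T, ∀ x, q (p x) = x := by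
  have hT2 : @T2Space (Function.End X) (Pi.topologicalSpace : TopologicalSpace (X → X)) :=
    (inferInstance : T2Space (X → X))
  let s : Set (Function.End X) := (fun q : X → X => (q ∘ p : X → X)) '' (EE T)
  have hcont : Continuous (fun q : X → X => (q ∘ p : X → X)) := by fun_prop
  have hR : ∀ r : X → X, Continuous (fun q : X → X => (q ∘ r : X → X)) := by
    intro r; fun_prop
  have hcs := (EE_compact T).image hcont
  obtain ⟨e, ⟨q, hq, hqe⟩, hee⟩ := @exists_idempotent_in_compact_subsemigroup
    (Function.End X) _ (Pi.topologicalSpace : TopologicalSpace (X → X)) hT2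
    (fun r => hR r) s
    ⟨_, p, hp, rfl⟩ hcs
    (by
      rintro _ ⟨a, ha, rfl⟩ _ ⟨b, hb, rfl⟩
      exact ⟨a ∘ p ∘ b, EE_comp T _ _ ha (EE_comp T _ _ hp hb), rfl⟩)
  refine ⟨q, hq, fun x => ?_⟩
  have heE : (e : X → X) ∈ EE T := hqe ▸ EE_comp T _ _ hq hp
  have h1 : ∀ y, (e : X → X) y = q (p y) := fun y => (congrFun hqe y).symm
  have h2 : (e : X → X) ((e : X → X) x) = (e : X → X) x := congrFun hee x
  rw [← h1]
  by_contra hne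
  have hpos := hd _ _ hne
  set c := ⨅ n : ℤ, dist (iterZ T n ((e : X → X) x)) (iterZ T n x) with hc
  have hbd : BddBelow (Set.range fun n : ℤ =>
      dist (iterZ T n ((e : X → X) x)) (iterZ T n x)) :=
    ⟨0, by rintro _ ⟨k, rfl⟩; exact dist_nonneg⟩
  have h3 := EE_induct T (fun r : X → X => dist (r ((e : X → X) x)) (r x)) (by fun_prop)
    (Set.Ici c) isClosed_Ici (fun n => ciInf_le hbd n)
    e heE
  simp only [Set.mem_Ici] at h3
  rw [h2, dist_self] at h3
  linarith

lemma EE_exists [TopologicalSpace X] [CompactSpace X] (T : X ≃ₜ X) {Y : Type*}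
    [TopologicalSpace Y] [T2Space Y] (f : (X → X) → Y) (hf : Continuous f) (y : Y)
    (hy : y ∈ closure (Set.range fun n : ℤ => f (iterZ T n))) : ∃ p ∈ EE T, f p = y := by
  have : closure (Set.range fun n : ℤ => f (iterZ T n)) ⊆ f '' EE T := by
    apply closure_minimal _ ((EE_compact T).image hf).isClosed
    rintro _ ⟨n, rfl⟩
    exact ⟨_, subset_closure ⟨n, rfl⟩, rfl⟩
  exact this hy

/-- good points at scale `ε` -/
def UU [MetricSpace X] (T : X ≃ₜ X) (ε : ℝ) : Set (X × X) :=
  {u | ∃ N : Set (X × X), IsOpen N ∧ u ∈ N ∧ ∀ u' ∈ N, ∀ u'' ∈ N, ∀ n : ℤ, ∃ k : ℤ,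
    dist (iterZ T n u'.1, iterZ T n u'.2) (iterZ T k u''.1, iterZ T k u''.2) < ε}

lemma UU_open [MetricSpace X] (T : X ≃ₜ X) (ε : ℝ) : IsOpen (UU T ε) := by
  rw [isOpen_iff_forall_mem_open]
  rintro u ⟨N, hN, hu, h⟩
  exact ⟨N, fun v hv => ⟨N, hN, hv, h⟩, hN, hu⟩

lemma UU_nonempty [MetricSpace X] [CompactSpace X] [Nonempty X] (T : X ≃ₜ X) (ε : ℝ)
    (hε : 0 < ε) : (UU T ε).Nonempty := by
  classical
  obtain ⟨t, -, htf, ht⟩ := Metric.totallyBounded_iff.1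
    (isCompact_univ (X := X × X)).totallyBounded (ε / 2) (half_pos hε) |>.imp
      (fun t h => (⟨trivial, h.1, h.2⟩ : True ∧ _ ∧ _))
  lift t to Finset (X × X) using htf
  let J : X × X → Finset (X × X) := fun u =>
    t.filter (fun c => ∃ n : ℤ, dist (iterZ T n u.1, iterZ T n u.2) c < ε / 2)
  obtain ⟨u, hu⟩ : ∃ u, ∀ v, (J v).card ≤ (J u).card := by
    have hb : ∀ v, (J v).card ≤ t.card := fun v => Finset.card_filter_le _ _
    have hfin : (Set.range fun v => (J v).card).Finite :=
      (Set.finite_Iic t.card).subset (by rintro _ ⟨v, rfl⟩; exact hb v)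
    obtain ⟨_, ⟨u, rfl⟩, hm⟩ := Set.exists_max_image _ id hfin (Set.range_nonempty _)
    exact ⟨u, fun v => hm _ ⟨v, rfl⟩⟩
  let O : X × X → Set (X × X) := fun c =>
    {v | ∃ n : ℤ, dist (iterZ T n v.1, iterZ T n v.2) c < ε / 2}
  have hO : ∀ c, IsOpen (O c) := by
    intro c
    have : O c = ⋃ n : ℤ, {v | dist (iterZ T n v.1, iterZ T n v.2) c < ε / 2} := by
      ext v; simp [O]
    rw [this]
    refine isOpen_iUnion fun n => isOpen_lt ?_ continuous_const
    have := iterZ_cont T n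
    fun_prop
  have hJ : ∀ v c, c ∈ J v ↔ c ∈ t ∧ v ∈ O c := by
    intro v c; simp only [J, O, Finset.mem_filter, Set.mem_ofPred_eq]
  let N : Set (X × X) := ⋂ c ∈ J u, O c
  have hN : ∀ v ∈ N, J v = J u := by
    intro v hv
    symm
    apply Finset.eq_of_subset_of_card_le _ (hu v)
    intro c hc
    rw [hJ]
    exact ⟨((hJ _ _).1 hc).1, by simpa using Set.mem_iInter₂.1 hv c hc⟩
  refine ⟨u, N, isOpen_biInter_finset fun c _ => hO c,
    Set.mem_iInter₂.2 fun c hc => ((hJ _ _).1 hc).2, ?_⟩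
  intro u' hu' u'' hu'' n
  have := ht (Set.mem_univ (iterZ T n u'.1, iterZ T n u'.2))
  simp only [Set.mem_iUnion, Metric.mem_ball] at this
  obtain ⟨c, hc, hd⟩ := this
  have h1 : c ∈ J u' := (hJ _ _).2 ⟨by simpa using hc, n, hd⟩
  rw [hN u' hu', ← hN u'' hu''] at h1
  obtain ⟨k, hk⟩ := ((hJ _ _).1 h1).2
  refine ⟨k, ?_⟩
  calc _ ≤ _ := dist_triangle_right _ _ c
    _ < ε := by linarith

lemma UU_dense [MetricSpace X] [CompactSpace X] [Nonempty X] (T : X ≃ₜ X) (hmin : IsMinimal T)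
    (x0 : X) (ε : ℝ) (hε : 0 < ε) : Dense {a | (x0, a) ∈ UU T ε} := by
  rw [dense_iff_inter_open]
  intro V hV hVne
  -- finitely many shifts suffice
  obtain ⟨s, hs⟩ := (isCompact_univ (X := X)).elim_finite_subcover
    (fun k : ℤ => iterZ T k ⁻¹' V) (fun k => hV.preimage (iterZ_cont T k)) (by
      intro b _
      obtain ⟨y, hyV, k, rfl⟩ := (hmin b).inter_open_nonempty V hV hVne
      exact Set.mem_iUnion.2 ⟨k, hyV⟩)
  obtain ⟨δ, hδ, hδs⟩ : ∃ δ > 0, ∀ k ∈ s, ∀ u v : X × X, dist u v < δ →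
      dist (u.1, iterZ T k u.2) (v.1, iterZ T k v.2) < ε := by
    have h1 : ∀ k ∈ s, {q : (X × X) × (X × X) |
        dist (q.1.1, iterZ T k q.1.2) (q.2.1, iterZ T k q.2.2) < ε} ∈ uniformity (X × X) := by
      intro k _
      have hc : Continuous (fun u : X × X => (u.1, iterZ T k u.2)) := by
        have := iterZ_cont T k
        fun_prop
      have hu := CompactSpace.uniformContinuous_of_continuous hc
      exact hu (Metric.dist_mem_uniformity hε)
    have h2 := (Filter.biInter_finset_mem s).2 h1
    obtain ⟨δ, hδ, h⟩ := Metric.mem_uniformity_dist.1 h2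
    refine ⟨δ, hδ, fun k hk u v huv => ?_⟩
    exact Set.mem_iInter₂.1 (h huv) k hk
  obtain ⟨⟨y, b⟩, hyb⟩ := UU_nonempty T δ hδ
  -- move the first coordinate
  obtain ⟨b', hb'⟩ : ∃ b', (x0, b') ∈ UU T δ := by
    have hop : IsOpen {z | (z, b) ∈ UU T δ} := (UU_open T δ).preimage (by fun_prop)
    obtain ⟨_, hz, n, rfl⟩ := (hmin x0).inter_open_nonempty _ hop ⟨y, hyb⟩
    obtain ⟨N, hN, hu, h⟩ := hz
    refine ⟨iterZ T (-n) b, (fun u : X × X => (iterZ T n u.1, iterZ T n u.2)) ⁻¹' N,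
      hN.preimage ?_, ?_, ?_⟩
    · have := iterZ_cont T n
      fun_prop
    · simpa [← iterZ_add, iterZ_zero] using hu
    · intro u' hu' u'' hu'' m
      obtain ⟨k, hk⟩ := h _ hu' _ hu'' (m - n)
      refine ⟨k + n, ?_⟩
      simpa [← iterZ_add] using hk
  have := hs (Set.mem_univ b')
  simp only [Set.mem_iUnion] at this
  obtain ⟨k, hk, hkV⟩ := this
  refine ⟨iterZ T k b', hkV, ?_⟩
  obtain ⟨N, hN, hu, h⟩ := hb'
  refine ⟨(fun u : X × X => (u.1, iterZ T (-k) u.2)) ⁻¹' N, hN.preimage ?_, ?_, ?_⟩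
  · have := iterZ_cont T (-k)
    fun_prop
  · simpa [← iterZ_add, iterZ_zero] using hu
  · intro u' hu' u'' hu'' n
    obtain ⟨j, hj⟩ := h _ hu' _ hu'' n
    refine ⟨j, ?_⟩
    have h3 := hδs k hk _ _ hj
    simp only [← iterZ_add] at h3
    rwa [show k + (n + -k) = n by ring, show k + (j + -k) = j by ring] at h3

lemma good_point [MetricSpace X] [CompactSpace X] [Nonempty X] (T : X ≃ₜ X) (hmin : IsMinimal T)
    (x0 : X) : ∃ a, ∀ b c, (x0, a, b, c) ∈ Para T → ∃ p ∈ EE T, p x0 = b ∧ p a = c := by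
  have hD : Dense (⋂ j : ℕ, {a | (x0, a) ∈ UU T (1 / ((j : ℝ) + 1))}) := by
    apply dense_iInter_of_isOpen
    · intro j
      exact (UU_open T _).preimage (by fun_prop)
    · intro j
      exact UU_dense T hmin x0 _ (by positivity)
  obtain ⟨a, ha⟩ := hD.nonempty
  refine ⟨a, fun b c hbc => ?_⟩
  obtain ⟨p, hp, hpe⟩ := EE_exists T (fun r : X → X => (r x0, r a)) (by fun_prop) (b, c) (by
    rw [Metric.mem_closure_iff]
    intro ε hε
    obtain ⟨j, hj⟩ := exists_nat_one_div_lt (half_pos hε)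
    obtain ⟨N, hN, hu, h⟩ := Set.mem_iInter.1 ha j
    have hop : IsOpen {q : X × X × X × X |
        (q.1, q.2.1) ∈ N ∧ dist (q.2.2.1, q.2.2.2) (b, c) < ε / 2} :=
      (hN.preimage (f := fun q : X × X × X × X => (q.1, q.2.1)) (by fun_prop)).inter
        (isOpen_lt (f := fun q : X × X × X × X => dist (q.2.2.1, q.2.2.2) (b, c))
          (by fun_prop) continuous_const)
    obtain ⟨_, ⟨hq1, hq2⟩, x, m, n, rfl⟩ := mem_closure_iff.1 hbc _ hop
      ⟨hu, by simpa using half_pos hε⟩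
    obtain ⟨k, hk⟩ := h _ hq1 _ hu n
    refine ⟨_, ⟨k, rfl⟩, ?_⟩
    simp only [← iterZ_add] at hk hq2
    rw [add_comm m n, dist_comm] at hq2
    calc _ ≤ _ := dist_triangle _ _ _
      _ < ε := by linarith)
  exact ⟨p, hp, congrArg Prod.fst hpe, congrArg Prod.snd hpe⟩

lemma Para_map [TopologicalSpace X] (T : X ≃ₜ X) (f : X × X × X × X → X × X × X × X)
    (hf : Continuous f)
    (h : ∀ (x : X) (m n : ℤ), ∃ (x' : X) (m' n' : ℤ),
      f (x, iterZ T m x, iterZ T n x, iterZ T (m + n) x) =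
        (x', iterZ T m' x', iterZ T n' x', iterZ T (m' + n') x'))
    (q : X × X × X × X) (hq : q ∈ Para T) : f q ∈ Para T := by
  refine map_mem_closure hf hq ?_
  rintro _ ⟨x, m, n, rfl⟩
  exact h x m n

lemma Para_act [TopologicalSpace X] (T : X ≃ₜ X) (p : X → X) (hp : p ∈ EE T)
    (x y z w : X) (hq : (x, y, z, w) ∈ Para T) : (p x, p y, z, w) ∈ Para T := by
  refine EE_induct T (fun r : X → X => (r x, r y, z, w)) (by fun_prop) _ isClosed_closure ?_ p hp
  intro i
  refine Para_map T (fun q => (iterZ T i q.1, iterZ T i q.2.1, q.2.2.1, q.2.2.2)) ?_ ?_ _ hq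
  · have := iterZ_cont T i
    fun_prop
  · intro x m n
    refine ⟨iterZ T i x, m, n - i, ?_⟩
    simp only [← iterZ_add]
    ring_nf

lemma Para_swap [TopologicalSpace X] (T : X ≃ₜ X)
    (x y z w : X) (hq : (x, y, z, w) ∈ Para T) : (x, z, y, w) ∈ Para T := by
  refine Para_map T (fun q => (q.1, q.2.2.1, q.2.1, q.2.2.2)) (by fun_prop) ?_ _ hq
  intro x m n
  exact ⟨x, n, m, by rw [add_comm]⟩

lemma Para_flip [TopologicalSpace X] (T : X ≃ₜ X)
    (x y z w : X) (hq : (x, y, z, w) ∈ Para T) : (z, w, x, y) ∈ Para T := by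
  refine Para_map T (fun q => (q.2.2.1, q.2.2.2, q.1, q.2.1)) (by fun_prop) ?_ _ hq
  intro x m n
  refine ⟨iterZ T n x, m, -n, ?_⟩
  simp only [← iterZ_add]
  ring_nf
  simp [iterZ_zero]

lemma RP_Para [MetricSpace X] [CompactSpace X] (T : X ≃ₜ X) (hmin : IsMinimal T)
    (b b' c : X) (h : RP T b b') : (b, c, b', c) ∈ Para T := by
  suffices hw : ∃ w, (w, w, b, b') ∈ Para T by
    obtain ⟨w, hw⟩ := hw
    obtain ⟨p, hp, hpw⟩ := EE_exists T (fun r : X → X => r w) (by fun_prop) c (hmin w c)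
    have := Para_act T p hp _ _ _ _ hw
    rw [hpw] at this
    exact Para_swap T _ _ _ _ (Para_flip T _ _ _ _ this)
  have key : ∀ j : ℕ, ∃ q : X × X × X × X, q ∈ Para T ∧ dist q.1 q.2.1 < 1 / ((j : ℝ) + 1) ∧
      dist q.2.2.1 b < 1 / ((j : ℝ) + 1) ∧ dist q.2.2.2 b' < 1 / ((j : ℝ) + 1) := by
    intro j
    obtain ⟨x, y, n, h1, h2, h3⟩ := h (1 / ((j : ℝ) + 1)) (by positivity)
    have hop : IsOpen {z : X | dist z b' < 1 / ((j : ℝ) + 1) ∧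
        dist (iterZ T n x) (iterZ T n z) < 1 / ((j : ℝ) + 1)} := by
      have := iterZ_cont T n
      exact (isOpen_lt (f := fun z : X => dist z b') (by fun_prop) continuous_const).inter
        (isOpen_lt (f := fun z : X => dist (iterZ T n x) (iterZ T n z)) (by fun_prop)
          continuous_const)
    obtain ⟨_, ⟨h4, h5⟩, i, rfl⟩ := (hmin x).inter_open_nonempty _ hop ⟨y, h2, h3⟩
    refine ⟨(iterZ T n x, iterZ T n (iterZ T i x), x, iterZ T i x), subset_closure ?_, h5, h1, h4⟩
    refine ⟨iterZ T n x, i, -n, ?_⟩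
    simp only [← iterZ_add]
    ring_nf
    simp [iterZ_zero]
  choose q hq h1 h2 h3 using key
  obtain ⟨⟨w, w', z, z'⟩, -, φ, hφ, hlim⟩ :=
    isCompact_univ.tendsto_subseq (fun j => Set.mem_univ (q j))
  have hz : Tendsto (fun j => 1 / ((φ j : ℝ) + 1)) atTop (𝓝 0) :=
    (tendsto_one_div_add_atTop_nhds_zero_nat (𝕜 := ℝ)).comp hφ.tendsto_atTop
  have hmem : (w, w', z, z') ∈ Para T :=
    isClosed_closure.mem_of_tendsto hlim (Eventually.of_forall fun j => hq _)
  have zero : ∀ f : X × X × X × X → ℝ, Continuous f → (∀ j, f (q j) < 1 / ((j : ℝ) + 1)) →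
      f (w, w', z, z') ≤ 0 := by
    intro f hf hfl
    exact le_of_tendsto_of_tendsto' ((hf.tendsto _).comp hlim) hz (fun j => (hfl _).le)
  have e1 : w = w' := dist_le_zero.1 (zero (fun q => dist q.1 q.2.1) (by fun_prop) h1)
  have e2 : z = b := dist_le_zero.1 (zero (fun q => dist q.2.2.1 b) (by fun_prop) h2)
  have e3 : z' = b' := dist_le_zero.1 (zero (fun q => dist q.2.2.2 b') (by fun_prop) h3)
  subst e1 e2 e3
  exact ⟨w, hmem⟩

/-- The set `L`. -/
def LL [TopologicalSpace X] (T : X ≃ₜ X) (x0 : X) : Set (X × X × X × X × X) :=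
  closure {q : X × X × X × X × X |
      ∃ m n p : ℤ, q = (iterZ T m x0, iterZ T n x0, iterZ T (m + n) x0,
        iterZ T p x0, iterZ T (p + m) x0)}

lemma LL_act [TopologicalSpace X] (T : X ≃ₜ X) (x0 : X) (p : X → X) (hp : p ∈ EE T)
    (y1 y2 y3 y4 y5 : X) (h : (y1, y2, y3, y4, y5) ∈ LL T x0) :
    (p y1, y2, p y3, y4, p y5) ∈ LL T x0 ∧ (y1, p y2, p y3, y4, y5) ∈ LL T x0 ∧
      (y1, y2, y3, p y4, p y5) ∈ LL T x0 := by
  refine ⟨?_, ?_, ?_⟩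
  · refine EE_induct T (fun r : X → X => (r y1, y2, r y3, y4, r y5)) (by fun_prop) _
      isClosed_closure ?_ p hp
    intro i
    have hc := iterZ_cont T i
    refine map_mem_closure (f := fun q : X × X × X × X × X =>
      (iterZ T i q.1, q.2.1, iterZ T i q.2.2.1, q.2.2.2.1, iterZ T i q.2.2.2.2))
      (by fun_prop) h ?_
    rintro _ ⟨m, n, k, rfl⟩
    refine ⟨i + m, n, k, ?_⟩
    simp only [← iterZ_add]
    ring_nf
  · refine EE_induct T (fun r : X → X => (y1, r y2, r y3, y4, y5)) (by fun_prop) _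
      isClosed_closure ?_ p hp
    intro i
    have hc := iterZ_cont T i
    refine map_mem_closure (f := fun q : X × X × X × X × X =>
      (q.1, iterZ T i q.2.1, iterZ T i q.2.2.1, q.2.2.2.1, q.2.2.2.2))
      (by fun_prop) h ?_
    rintro _ ⟨m, n, k, rfl⟩
    refine ⟨m, i + n, k, ?_⟩
    simp only [← iterZ_add]
    ring_nf
  · refine EE_induct T (fun r : X → X => (y1, y2, y3, r y4, r y5)) (by fun_prop) _
      isClosed_closure ?_ p hp
    intro i
    have hc := iterZ_cont T i
    refine map_mem_closure (f := fun q : X × X × X × X × X =>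
      (q.1, q.2.1, q.2.2.1, iterZ T i q.2.2.2.1, iterZ T i q.2.2.2.2))
      (by fun_prop) h ?_
    rintro _ ⟨m, n, k, rfl⟩
    refine ⟨m, n, i + k, ?_⟩
    simp only [← iterZ_add]
    ring_nf

lemma LL_Para [TopologicalSpace X] (T : X ≃ₜ X) (x0 : X)
    (y1 y2 y3 y4 y5 : X) (h : (y1, y2, y3, y4, y5) ∈ LL T x0) :
    (x0, y1, y2, y3) ∈ Para T ∧ (x0, y1, y4, y5) ∈ Para T := by
  constructor
  · refine map_mem_closure (f := fun q : X × X × X × X × X => (x0, q.1, q.2.1, q.2.2.1))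
      (by fun_prop) h ?_
    rintro _ ⟨m, n, k, rfl⟩
    exact ⟨x0, m, n, rfl⟩
  · refine map_mem_closure (f := fun q : X × X × X × X × X => (x0, q.1, q.2.2.2.1, q.2.2.2.2))
      (by fun_prop) h ?_
    rintro _ ⟨m, n, k, rfl⟩
    exact ⟨x0, m, k, by rw [add_comm m k]⟩

end Helpers

/-- Stability of the set `L ⊆ X⁵` under replacing the 2nd and 4th coordinates by
regionally proximal points. -/
theorem stmt14 {X : Type*} [MetricSpace X] [CompactSpace X] [Nonempty X]
    (T : X ≃ₜ X) (hdistal : IsDistal T) (hmin : IsMinimal T) (x0 : X)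
    (x1 x2 x3 x4 x5 x2' x4' : X)
    (hL : (x1, x2, x3, x4, x5) ∈ closure {q : X × X × X × X × X |
      ∃ m n p : ℤ, q = (iterZ T m x0, iterZ T n x0, iterZ T (m + n) x0,
        iterZ T p x0, iterZ T (p + m) x0)})
    (h2 : RP T x2 x2') (h4 : RP T x4 x4') :
    (x1, x2', x3, x4', x5) ∈ closure {q : X × X × X × X × X |
      ∃ m n p : ℤ, q = (iterZ T m x0, iterZ T n x0, iterZ T (m + n) x0,
        iterZ T p x0, iterZ T (p + m) x0)} := by
  obtain ⟨a, ha⟩ := good_point T hmin x0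
  have hL' : (x1, x2, x3, x4, x5) ∈ LL T x0 := hL
  change _ ∈ LL T x0
  obtain ⟨p, hp, hpa⟩ := EE_exists T (fun r : X → X => r x1) (by fun_prop) a (hmin x1 a)
  obtain ⟨q, hq, hqp⟩ := EE_inv T hdistal p hp
  have h1 := (LL_act T x0 p hp _ _ _ _ _ hL').1
  rw [hpa] at h1
  obtain ⟨hP2, hP4⟩ := LL_Para T x0 _ _ _ _ _ h1
  have key : ∀ b b' c, (x0, a, b, c) ∈ Para T → RP T b b' → ∃ r ∈ EE T, r x0 = b' ∧ r a = c := by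
    intro b b' c hb hr
    obtain ⟨s, hs, rfl, rfl⟩ := ha b c hb
    obtain ⟨t, ht, hts⟩ := EE_inv T hdistal s hs
    have h2 := Para_act T t ht _ _ _ _ (RP_Para T hmin _ _ (s a) hr)
    rw [hts, hts] at h2
    exact ha _ _ h2
  obtain ⟨r, hr, hr1, hr2⟩ := key _ _ _ hP2 h2
  obtain ⟨s, hs, hs1, hs2⟩ := key _ _ _ hP4 h4
  have h0 : (x0, x0, x0, x0, x0) ∈ LL T x0 :=
    subset_closure ⟨0, 0, 0, by simp [iterZ_zero]⟩
  obtain ⟨u, hu, hua⟩ := EE_exists T (fun r : X → X => r x0) (by fun_prop) a (hmin x0 a)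
  have g1 := (LL_act T x0 u hu _ _ _ _ _ h0).1
  rw [hua] at g1
  have g2 := (LL_act T x0 r hr _ _ _ _ _ g1).2.1
  have g3 := (LL_act T x0 s hs _ _ _ _ _ g2).2.2
  rw [hr1, hr2, hs1, hs2] at g3
  have g4 := (LL_act T x0 q hq _ _ _ _ _ g3).1
  rw [← hpa, hqp, hqp, hqp] at g4
  exact g4
end
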